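/- arXiv:1010.2013 — 5 statements merged into one kernel-verified Lean document; each statement's English description precedes it below -/
import Mathlib

section
/- Define χ_{a,b} : ℝ → ℝ by χ_{a,b}(t) = exp(1/(t - b) - 1/(t - a)) if a < t < b, and χ_{a,b}(t) = 0 otherwise, and set f = χ_{-1/3, 1/3} and g = χ_{0, 2/3}. Then f'(t) · g'(t) < 0 for every t with 0 < t < 1/3, and f'(t) · g'(t) = 0 for every t outside the open interval (0, 1/3). Consequently, -∫_{-1}^{1} f'(t) g'(t) dt > 0. -/
/-!
On `(a, b)` the logarithmic derivative of `χ_{a,b}` is `1/(t - a)² - 1/(t - b)²`, so `χ_{a,b}` is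
strictly increasing left of the midpoint `(a + b)/2` and strictly decreasing right of it
(`deriv_chi_pos`, `deriv_chi_neg`). Outside `(a, b)` it attains its minimum value `0`, so its
derivative vanishes there (`deriv_chi_of_notMem`). The midpoints of `f` and `g` are `0` and `1/3`,
which gives opposite signs of `f'` and `g'` on `(0, 1/3)`; for `t ≤ 0` one has `g'(t) = 0`, and for
`t ≥ 1/3` one has `f'(t) = 0`. Since `χ_{a,b}` is smooth (`contDiff_chi`), `-f' g'` is continuous,
nonnegative and not identically zero, so its integral is positive.
-/

/-- The cutoff function χ_{a,b}. -/
noncomputable def chi (a b t : ℝ) : ℝ :=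
  if a < t ∧ t < b then Real.exp (1 / (t - b) - 1 / (t - a)) else 0

/-- `χ_{a,b}` factors through Mathlib's smooth function `expNegInvGlue`, which is `exp (-1/x)` for
`x > 0` and `0` otherwise; smoothness is inherited from it. -/
theorem chi_eq_glue (a b : ℝ) :
    chi a b = fun t => expNegInvGlue (t - a) * expNegInvGlue (b - t) := by
  funext t
  unfold chi expNegInvGlue
  by_cases ha : a < t
  · by_cases hb : t < b
    · rw [if_pos ⟨ha, hb⟩, if_neg (by linarith), if_neg (by linarith), ← Real.exp_add]
      congr 1
      rw [← neg_sub t b, inv_neg]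
      ring
    · rw [if_neg (fun h => hb h.2), if_pos (show b - t ≤ 0 by linarith), mul_zero]
  · rw [if_neg (fun h => ha h.1), if_pos (show t - a ≤ 0 by linarith), zero_mul]

theorem contDiff_chi (a b : ℝ) : ContDiff ℝ 1 (chi a b) := by
  rw [chi_eq_glue]
  have h : ContDiff ℝ 1 expNegInvGlue := expNegInvGlue.contDiff (n := 1)
  exact (h.comp (contDiff_id.sub contDiff_const)).mul (h.comp (contDiff_const.sub contDiff_id))

theorem continuous_deriv_chi (a b : ℝ) : Continuous (deriv (chi a b)) :=
  (contDiff_chi a b).continuous_deriv le_rfl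

theorem chi_nonneg (a b t : ℝ) : 0 ≤ chi a b t := by
  unfold chi
  split_ifs
  · exact (Real.exp_pos _).le
  · exact le_rfl

/-- Every point outside `(a, b)`, endpoints included, is a global minimum of `χ_{a,b}`. -/
theorem deriv_chi_of_notMem {a b t : ℝ} (h : ¬ (a < t ∧ t < b)) : deriv (chi a b) t = 0 := by
  refine IsLocalMin.deriv_eq_zero (Filter.Eventually.of_forall fun x => ?_)
  have h0 : chi a b t = 0 := if_neg h
  rw [h0]
  exact chi_nonneg a b x

theorem deriv_chi {a b t : ℝ} (ha : a < t) (hb : t < b) :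
    deriv (chi a b) t =
      Real.exp (1 / (t - b) - 1 / (t - a)) * (1 / (t - a) ^ 2 - 1 / (t - b) ^ 2) := by
  have heq : chi a b =ᶠ[nhds t] fun s => Real.exp ((s - b)⁻¹ - (s - a)⁻¹) := by
    filter_upwards [Ioo_mem_nhds ha hb] with s hs
    simp [chi, hs.1, hs.2]
  rw [heq.deriv_eq]
  have h1 := ((hasDerivAt_id t).sub_const b).fun_inv (sub_ne_zero.2 hb.ne)
  have h2 := ((hasDerivAt_id t).sub_const a).fun_inv (sub_ne_zero.2 ha.ne')
  have h3 := (h1.fun_sub h2).exp.deriv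
  simp only [id] at h3
  rw [h3]
  simp only [one_div]
  ring

theorem deriv_chi_pos {a b t : ℝ} (ha : a < t) (hm : 2 * t < a + b) :
    0 < deriv (chi a b) t := by
  rw [deriv_chi ha (by linarith)]
  refine mul_pos (Real.exp_pos _) (sub_pos.2 ?_)
  have h : 0 < t - a := by linarith
  exact one_div_lt_one_div_of_lt (by positivity) (by nlinarith)

theorem deriv_chi_neg {a b t : ℝ} (hb : t < b) (hm : a + b < 2 * t) :
    deriv (chi a b) t < 0 := by
  rw [deriv_chi (by linarith) hb]
  refine mul_neg_of_pos_of_neg (Real.exp_pos _) (sub_neg.2 ?_)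
  have h : 0 < (t - b) ^ 2 := by nlinarith
  exact one_div_lt_one_div_of_lt h (by nlinarith)

theorem fg_deriv_product :
    let f : ℝ → ℝ := chi (-1/3) (1/3)
    let g : ℝ → ℝ := chi 0 (2/3)
    (∀ t : ℝ, 0 < t → t < 1/3 → deriv f t * deriv g t < 0) ∧
    (∀ t : ℝ, t ∉ Set.Ioo (0 : ℝ) (1/3) → deriv f t * deriv g t = 0) ∧
    0 < -∫ t in (-1 : ℝ)..1, deriv f t * deriv g t := by
  intro f g
  have hneg : ∀ t : ℝ, 0 < t → t < 1/3 → deriv f t * deriv g t < 0 := fun t h0 h1 =>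
    mul_neg_of_neg_of_pos (deriv_chi_neg h1 (by linarith)) (deriv_chi_pos h0 (by linarith))
  have hzero : ∀ t : ℝ, t ∉ Set.Ioo (0 : ℝ) (1/3) → deriv f t * deriv g t = 0 := by
    intro t ht
    by_cases h0 : 0 < t
    · have hf : deriv f t = 0 := deriv_chi_of_notMem fun h => ht ⟨h0, h.2⟩
      rw [hf, zero_mul]
    · have hg : deriv g t = 0 := deriv_chi_of_notMem fun h => h0 h.1
      rw [hg, mul_zero]
  refine ⟨hneg, hzero, ?_⟩
  rw [← intervalIntegral.integral_neg]
  refine intervalIntegral.integral_pos (by norm_num) ?_ ?_ ?_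
  · exact ((continuous_deriv_chi _ _).mul (continuous_deriv_chi _ _)).neg.continuousOn
  · intro t _
    by_cases ht : t ∈ Set.Ioo (0 : ℝ) (1/3)
    · exact (neg_pos.2 (hneg t ht.1 ht.2)).le
    · rw [hzero t ht, neg_zero]
  · exact ⟨1/6, ⟨by norm_num, by norm_num⟩,
      neg_pos.2 (hneg _ (by norm_num) (by norm_num))⟩
end

section
/- There exist functions f, g : ℝ → ℝ, each infinitely differentiable, nonnegative everywhere, and with (compact) support contained in the interval [-1, 1], such that -∫_{-1}^{1} f'(t) g'(t) dt > 0. -/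
/-!
Let `T` be the smooth transition from `0` (on `t ≤ 0`) to `1` (on `t ≥ 1`), and take
`f t = T (2t + 1) - T (2t)` and `g t = T (2t + 2) - T (2t + 1)`. Both are smooth, nonnegative since
`T` is monotone, and supported in `[-1, 1]`. As `T'` vanishes outside `(0, 1)`, the derivatives of
the unit translates of `T` have pairwise disjoint supports, so only the common summand survives:
`f' t * g' t = -(2 T' (2t + 1))²`. The integral is therefore negative, because `T'` is continuous
and, by the mean value theorem, equal to `1` somewhere in `(0, 1)`.
-/

lemma deriv_smoothTransition_of_nonpos {x : ℝ} (hx : x ≤ 0) :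
    deriv Real.smoothTransition x = 0 := by
  have h : IsLocalMin Real.smoothTransition x := Filter.Eventually.of_forall fun y => by
    rw [Real.smoothTransition.zero_of_nonpos hx]
    exact Real.smoothTransition.nonneg y
  exact h.deriv_eq_zero

lemma deriv_smoothTransition_of_one_le {x : ℝ} (hx : 1 ≤ x) :
    deriv Real.smoothTransition x = 0 := by
  have h : IsLocalMax Real.smoothTransition x := Filter.Eventually.of_forall fun y => by
    rw [Real.smoothTransition.one_of_one_le hx]
    exact Real.smoothTransition.le_one y
  exact h.deriv_eq_zero

lemma hasDerivAt_smoothTransition_sub (a b t : ℝ) :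
    HasDerivAt (fun t => Real.smoothTransition (2 * t + a) - Real.smoothTransition (2 * t + b))
      (2 * (deriv Real.smoothTransition (2 * t + a) - deriv Real.smoothTransition (2 * t + b)))
      t := by
  have hd : Differentiable ℝ Real.smoothTransition :=
    (Real.smoothTransition.contDiff (n := 1)).differentiable (by norm_num)
  have key (c : ℝ) : HasDerivAt (fun t => Real.smoothTransition (2 * t + c))
      (deriv Real.smoothTransition (2 * t + c) * (2 * 1)) t :=
    (hd _).hasDerivAt.comp t (((hasDerivAt_id t).const_mul 2).add_const c)
  exact ((key a).sub (key b)).congr_deriv (by ring)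

lemma support_smoothTransition_sub {a b : ℝ} (ha : a ≤ 2) (hb : -1 ≤ b) (hab : b ≤ a) :
    Function.support
      (fun t => Real.smoothTransition (2 * t + a) - Real.smoothTransition (2 * t + b)) ⊆
      Set.Icc (-1 : ℝ) 1 := by
  intro t ht
  by_contra h
  rw [Set.mem_Icc, not_and_or, not_le, not_le] at h
  apply ht
  rcases h with h | h
  · simp only [Real.smoothTransition.zero_of_nonpos (show 2 * t + a ≤ 0 by linarith),
      Real.smoothTransition.zero_of_nonpos (show 2 * t + b ≤ 0 by linarith), sub_self]
  · simp only [Real.smoothTransition.one_of_one_le (show 1 ≤ 2 * t + a by linarith),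
      Real.smoothTransition.one_of_one_le (show 1 ≤ 2 * t + b by linarith), sub_self]

theorem exists_bump_neg_deriv_integral :
    ∃ f g : ℝ → ℝ, ContDiff ℝ (⊤ : ℕ∞) f ∧ ContDiff ℝ (⊤ : ℕ∞) g ∧
      (∀ t : ℝ, 0 ≤ f t) ∧ (∀ t : ℝ, 0 ≤ g t) ∧
      Function.support f ⊆ Set.Icc (-1 : ℝ) 1 ∧
      Function.support g ⊆ Set.Icc (-1 : ℝ) 1 ∧
      0 < -∫ t in (-1 : ℝ)..1, deriv f t * deriv g t := by
  have hs (c : ℝ) : ContDiff ℝ (⊤ : ℕ∞) fun t : ℝ => Real.smoothTransition (2 * t + c) :=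
    Real.smoothTransition.contDiff.comp (by fun_prop)
  refine ⟨fun t => Real.smoothTransition (2 * t + 1) - Real.smoothTransition (2 * t + 0),
    fun t => Real.smoothTransition (2 * t + 2) - Real.smoothTransition (2 * t + 1),
    (hs 1).sub (hs 0), (hs 2).sub (hs 1),
    fun t => sub_nonneg.2 (Real.smoothTransition.monotone (by linarith)),
    fun t => sub_nonneg.2 (Real.smoothTransition.monotone (by linarith)),
    support_smoothTransition_sub (by norm_num) (by norm_num) (by norm_num),
    support_smoothTransition_sub (by norm_num) (by norm_num) (by norm_num), ?_⟩
  rw [← intervalIntegral.integral_neg]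
  have hprod (t : ℝ) :
      -(deriv (fun t => Real.smoothTransition (2 * t + 1) - Real.smoothTransition (2 * t + 0)) t *
        deriv (fun t => Real.smoothTransition (2 * t + 2) - Real.smoothTransition (2 * t + 1)) t) =
      (2 * deriv Real.smoothTransition (2 * t + 1)) ^ 2 := by
    rw [(hasDerivAt_smoothTransition_sub 1 0 t).deriv, (hasDerivAt_smoothTransition_sub 2 1 t).deriv]
    rcases le_total (2 * t + 1) 0 with h | h
    · rw [deriv_smoothTransition_of_nonpos h,
        deriv_smoothTransition_of_nonpos (show 2 * t + 0 ≤ 0 by linarith)]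
      ring
    · rw [deriv_smoothTransition_of_one_le (show 1 ≤ 2 * t + 2 by linarith)]
      rcases le_total (2 * t + 0) 0 with h' | h'
      · rw [deriv_smoothTransition_of_nonpos h']
        ring
      · rw [deriv_smoothTransition_of_one_le (show 1 ≤ 2 * t + 1 by linarith)]
        ring
  simp only [hprod]
  have hc : Continuous (deriv Real.smoothTransition) :=
    (Real.smoothTransition.contDiff (n := 1)).continuous_deriv (by norm_num)
  obtain ⟨c, hc01, hc1⟩ := exists_deriv_eq_slope Real.smoothTransition zero_lt_one
    Real.smoothTransition.continuous.continuousOn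
    ((Real.smoothTransition.contDiff (n := 1)).differentiable (by norm_num)).differentiableOn
  rw [Real.smoothTransition.one, Real.smoothTransition.zero] at hc1
  refine intervalIntegral.integral_pos (by norm_num) (by fun_prop) (fun t _ => sq_nonneg _)
    ⟨(c - 1) / 2, ⟨by linarith [hc01.1], by linarith [hc01.2]⟩, ?_⟩
  rw [show 2 * ((c - 1) / 2) + 1 = c by ring, hc1]
  norm_num
end

section
/- There exist functions f, g : ℝ → ℝ, each infinitely differentiable, nonnegative everywhere, and with (compact) support contained in the interval [-1, 1], such that the product (∫_{-1}^{1} f(t) g(t) dt) · (-∫_{-1}^{1} f'(t) g'(t) dt) is strictly positive. -/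
/-!
Take `f = e ∘ q₁` and `g = e ∘ q₂`, where `e` is `expNegInvGlue` (`exp (-1/x)` for `x > 0`, zero
otherwise), `q₁ t = (1 + t) (1/3 - t)` and `q₂ t = (1 - t) (1/3 + t)`. Thus `f` is a bump on
`(-1, 1/3)` and `g` is its mirror image on `(-1/3, 1)`. On the overlap `(-1/3, 1/3)` of the supports
`f` decreases from its peak while `g` increases to its own, so `f' g' < 0` there, and `f' g' = 0`
elsewhere. Hence both factors of the product are integrals of continuous nonnegative functions that
are positive at `0`.
-/

/-- The classical formula `e'(x) = e(x) / x²`; it also holds for `x ≤ 0`, where `e` vanishes. -/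
lemma hasDerivAt_expNegInvGlue (x : ℝ) :
    HasDerivAt expNegInvGlue ((x⁻¹) ^ 2 * expNegInvGlue x) x := by
  simpa using expNegInvGlue.hasDerivAt_polynomial_eval_inv_mul 1 x

theorem exists_bump_product_integrals_pos :
    ∃ f g : ℝ → ℝ, ContDiff ℝ (⊤ : ℕ∞) f ∧ ContDiff ℝ (⊤ : ℕ∞) g ∧
      (∀ t : ℝ, 0 ≤ f t) ∧ (∀ t : ℝ, 0 ≤ g t) ∧
      Function.support f ⊆ Set.Icc (-1 : ℝ) 1 ∧
      Function.support g ⊆ Set.Icc (-1 : ℝ) 1 ∧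
      0 < (∫ t in (-1 : ℝ)..1, f t * g t) *
          (-∫ t in (-1 : ℝ)..1, deriv f t * deriv g t) := by
  set f : ℝ → ℝ := fun t => expNegInvGlue ((1 + t) * (1 / 3 - t)) with hf
  set g : ℝ → ℝ := fun t => expNegInvGlue ((1 - t) * (1 / 3 + t)) with hg
  have cf : ContDiff ℝ (⊤ : ℕ∞) f := expNegInvGlue.contDiff.comp (by fun_prop)
  have cg : ContDiff ℝ (⊤ : ℕ∞) g := expNegInvGlue.contDiff.comp (by fun_prop)
  have f0 : ∀ t, 0 ≤ f t := fun t => expNegInvGlue.nonneg _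
  have g0 : ∀ t, 0 ≤ g t := fun t => expNegInvGlue.nonneg _
  have fz : ∀ t, (1 + t) * (1 / 3 - t) ≤ 0 → f t = 0 :=
    fun t ht => expNegInvGlue.zero_of_nonpos ht
  have gz : ∀ t, (1 - t) * (1 / 3 + t) ≤ 0 → g t = 0 :=
    fun t ht => expNegInvGlue.zero_of_nonpos ht
  have fp : 0 < f 0 := expNegInvGlue.pos_of_pos (by norm_num)
  have gp : 0 < g 0 := expNegInvGlue.pos_of_pos (by norm_num)
  have df : ∀ t, deriv f t = (((1 + t) * (1 / 3 - t))⁻¹) ^ 2 * f t * (-2 / 3 - 2 * t) := by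
    intro t
    have hq : HasDerivAt (fun t : ℝ => (1 + t) * (1 / 3 - t)) (-2 / 3 - 2 * t) t := by
      refine (((hasDerivAt_id' t).const_add 1).mul
        ((hasDerivAt_id' t).const_sub (1 / 3))).congr_deriv ?_
      ring
    exact ((hasDerivAt_expNegInvGlue _).comp t hq).deriv
  have dg : ∀ t, deriv g t = (((1 - t) * (1 / 3 + t))⁻¹) ^ 2 * g t * (2 / 3 - 2 * t) := by
    intro t
    have hq : HasDerivAt (fun t : ℝ => (1 - t) * (1 / 3 + t)) (2 / 3 - 2 * t) t := by
      refine (((hasDerivAt_id' t).const_sub 1).mul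
        ((hasDerivAt_id' t).const_add (1 / 3))).congr_deriv ?_
      ring
    exact ((hasDerivAt_expNegInvGlue _).comp t hq).deriv
  have cdf : Continuous (deriv f) := cf.continuous_deriv (by simp)
  have cdg : Continuous (deriv g) := cg.continuous_deriv (by simp)
  refine ⟨f, g, cf, cg, f0, g0, ?_, ?_, mul_pos ?_ ?_⟩
  · intro t ht
    by_contra h
    refine ht (fz t ?_)
    rw [Set.mem_Icc, not_and_or, not_le, not_le] at h
    rcases h with h | h <;> nlinarith
  · intro t ht
    by_contra h
    refine ht (gz t ?_)
    rw [Set.mem_Icc, not_and_or, not_le, not_le] at h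
    rcases h with h | h <;> nlinarith
  · exact intervalIntegral.integral_pos (by norm_num)
      (cf.continuous.mul cg.continuous).continuousOn (fun t _ => mul_nonneg (f0 t) (g0 t))
      ⟨0, by norm_num, mul_pos fp gp⟩
  · rw [← intervalIntegral.integral_neg]
    refine intervalIntegral.integral_pos (by norm_num) (cdf.mul cdg).neg.continuousOn ?_
      ⟨0, by norm_num, ?_⟩
    · rintro t ⟨h1, h2⟩
      rw [df, dg]
      rcases le_total (1 / 3) t with h | h
      · rw [fz t (by nlinarith)]; simp
      rcases le_total t (-1 / 3) with h' | h'
      · rw [gz t (by nlinarith)]; simp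
      rw [neg_nonneg]
      exact mul_nonpos_of_nonpos_of_nonneg
        (mul_nonpos_of_nonneg_of_nonpos (mul_nonneg (sq_nonneg _) (f0 t)) (by linarith))
        (mul_nonneg (mul_nonneg (sq_nonneg _) (g0 t)) (by linarith))
    · rw [df, dg]
      have := mul_pos fp gp
      norm_num
      nlinarith
end

section
/- There exist functions φ, ψ : ℝ² → ℝ, each infinitely differentiable, nonnegative everywhere, and with compact support, such that ∫_{ℝ²} (φ · Δψ + ψ · Δφ) dx dy > 0, where Δ denotes the standard Laplacian Δu = ∂²u/∂x² + ∂²u/∂y² on ℝ². -/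
/-!
Separating variables reduces the problem to one dimension. For `φ(x, y) = f x * f y` and
`ψ(x, y) = h x * h y`, Fubini gives `∫ (φ Δψ + ψ Δφ) = 2 * A * B` with `A = ∫ (f h'' + h f'')` and
`B = ∫ f h`. Take `f` a bump function at the origin and `h` equal to `x ^ 2` on a neighbourhood of
the support of `f`, cut off further away. There `h'' = 2`, so two integrations by parts give
`A = 2 ∫ f h'' = 4 ∫ f > 0` (`exists_bump_one_dim`), while `B = ∫ x ^ 2 f > 0`.
-/

/-- The Euclidean Laplacian of a function on ℝ², computed via iterated
partial derivatives in each variable. -/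
noncomputable def lap (u : ℝ × ℝ → ℝ) (p : ℝ × ℝ) : ℝ :=
  deriv (deriv (fun x => u (x, p.2))) p.1 + deriv (deriv (fun y => u (p.1, y))) p.2

open MeasureTheory Filter Topology

/-- The second derivative is symmetric for the `L²` pairing of compactly supported functions. -/
lemma integral_mul_deriv_deriv_symm {f h : ℝ → ℝ} (hf : ContDiff ℝ (⊤ : ℕ∞) f)
    (hh : ContDiff ℝ (⊤ : ℕ∞) h) (cf : HasCompactSupport f) (ch : HasCompactSupport h) :
    ∫ x, h x * deriv (deriv f) x = ∫ x, f x * deriv (deriv h) x := by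
  have hf' : ContDiff ℝ (⊤ : ℕ∞) (deriv f) := (contDiff_infty_iff_deriv.1 hf).2
  have hh' : ContDiff ℝ (⊤ : ℕ∞) (deriv h) := (contDiff_infty_iff_deriv.1 hh).2
  -- All products below are continuous with compact support, because their left factor is.
  have int {u v : ℝ → ℝ} (hu : Continuous u) (hv : Continuous v) (cu : HasCompactSupport u) :
      Integrable (u * v) := (hu.mul hv).integrable_of_hasCompactSupport cu.mul_right
  have parts {u v : ℝ → ℝ} (hu : ContDiff ℝ (⊤ : ℕ∞) u) (hv : ContDiff ℝ (⊤ : ℕ∞) v)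
      (cu : HasCompactSupport u) : ∫ x, u x * deriv v x = -∫ x, deriv u x * v x := by
    have du := (contDiff_infty_iff_deriv.1 hu)
    have dv := (contDiff_infty_iff_deriv.1 hv)
    exact integral_mul_deriv_eq_deriv_mul_of_integrable
      (fun x _ => (du.1 x).hasDerivAt) (fun x _ => (dv.1 x).hasDerivAt)
      (int hu.continuous dv.2.continuous cu)
      (int du.2.continuous hv.continuous cu.deriv)
      (int hu.continuous hv.continuous cu)
  rw [parts hh hf' ch, parts hf hh' cf]
  simp_rw [mul_comm (deriv f _)]

/-- The one-dimensional pair: both the `L²` pairing of `f` and `h` and the second-derivative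
pairing are positive. -/
lemma exists_bump_one_dim :
    ∃ f h : ℝ → ℝ, ContDiff ℝ (⊤ : ℕ∞) f ∧ ContDiff ℝ (⊤ : ℕ∞) h ∧
      (∀ x, 0 ≤ f x) ∧ (∀ x, 0 ≤ h x) ∧ HasCompactSupport f ∧ HasCompactSupport h ∧
      0 < ∫ x, (f x * deriv (deriv h) x + h x * deriv (deriv f) x) ∧ 0 < ∫ x, f x * h x := by
  let f : ContDiffBump (0 : ℝ) := ⟨1, 2, by norm_num, by norm_num⟩
  let χ : ContDiffBump (0 : ℝ) := ⟨3, 4, by norm_num, by norm_num⟩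
  let h : ℝ → ℝ := fun x => x ^ 2 * χ x
  have hf : ContDiff ℝ (⊤ : ℕ∞) f := f.contDiff
  have hh : ContDiff ℝ (⊤ : ℕ∞) h := (contDiff_id.pow 2).mul χ.contDiff
  have cf : HasCompactSupport f := f.hasCompactSupport
  have ch : HasCompactSupport h := χ.hasCompactSupport.mul_left
  have h0 : ∀ x, 0 ≤ h x := fun x => mul_nonneg (sq_nonneg x) χ.nonneg
  have f1 : f 1 = 1 := f.one_of_mem_closedBall (by simp [f])
  have χ1 : χ 1 = 1 := χ.one_of_mem_closedBall (by simp [χ])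
  have hf' : ContDiff ℝ (⊤ : ℕ∞) (deriv f) := (contDiff_infty_iff_deriv.1 hf).2
  have hh' : ContDiff ℝ (⊤ : ℕ∞) (deriv h) := (contDiff_infty_iff_deriv.1 hh).2
  have hf'' : Continuous (deriv (deriv f)) := (contDiff_infty_iff_deriv.1 hf').2.continuous
  have hh'' : Continuous (deriv (deriv h)) := (contDiff_infty_iff_deriv.1 hh').2.continuous
  have key : ∀ x, f x * deriv (deriv h) x = 2 * f x := by
    intro x
    by_cases hx : x ∈ Metric.ball (0 : ℝ) 3
    · have e : h =ᶠ[𝓝 x] fun y => y ^ 2 := by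
        filter_upwards [Metric.isOpen_ball.mem_nhds hx] with y hy
        have : χ y = 1 := χ.one_of_mem_closedBall (Metric.ball_subset_closedBall hy)
        simp [h, this]
      have d : deriv (fun y : ℝ => y ^ 2) = fun y => 2 * y := by
        ext y; simp
      rw [e.deriv.deriv_eq, d, deriv_const_mul _ differentiableAt_id, deriv_id'']
      ring
    · have : f x = 0 := f.zero_of_le_dist (by
        have : 3 ≤ dist x 0 := not_lt.1 fun hlt => hx (Metric.mem_ball.2 hlt)
        simp only [f]; linarith)
      simp [this]
  refine ⟨f, h, hf, hh, fun _ => f.nonneg, h0, cf, ch, ?_, ?_⟩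
  · have i₁ : Integrable fun x => f x * deriv (deriv h) x :=
      (hf.continuous.mul hh'').integrable_of_hasCompactSupport cf.mul_right
    have i₂ : Integrable fun x => h x * deriv (deriv f) x :=
      (hh.continuous.mul hf'').integrable_of_hasCompactSupport ch.mul_right
    rw [integral_add i₁ i₂, integral_mul_deriv_deriv_symm hf hh cf ch]
    simp_rw [key, integral_const_mul]
    have := f.integral_pos (μ := volume)
    linarith
  · refine (hf.continuous.mul hh.continuous).integral_pos_of_hasCompactSupport_nonneg_nonzero
      cf.mul_right (fun x => mul_nonneg f.nonneg (h0 x)) (x := 1) ?_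
    simp [h, f1, χ1]

lemma lap_mul (f : ℝ → ℝ) (p : ℝ × ℝ) :
    lap (fun q => f q.1 * f q.2) p =
      deriv (deriv f) p.1 * f p.2 + f p.1 * deriv (deriv f) p.2 := by
  have d₁ (g : ℝ → ℝ) (c : ℝ) : deriv (fun x => g x * c) = fun x => deriv g x * c := by
    ext x; exact deriv_mul_const_field c
  have d₂ (g : ℝ → ℝ) (c : ℝ) : deriv (fun x => c * g x) = fun x => c * deriv g x := by
    ext x; exact deriv_const_mul_field c
  simp only [lap, d₁, d₂]

lemma hasCompactSupport_mul_prod {f : ℝ → ℝ} (cf : HasCompactSupport f) :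
    HasCompactSupport (fun q : ℝ × ℝ => f q.1 * f q.2) := by
  refine HasCompactSupport.intro (IsCompact.prod cf cf) fun q hq => ?_
  by_contra hne
  obtain ⟨h₁, h₂⟩ := mul_ne_zero_iff.1 hne
  exact hq ⟨subset_tsupport f h₁, subset_tsupport f h₂⟩

theorem exists_bump_laplacian_integral_pos :
    ∃ φ ψ : ℝ × ℝ → ℝ, ContDiff ℝ (⊤ : ℕ∞) φ ∧ ContDiff ℝ (⊤ : ℕ∞) ψ ∧
      (∀ p, 0 ≤ φ p) ∧ (∀ p, 0 ≤ ψ p) ∧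
      HasCompactSupport φ ∧ HasCompactSupport ψ ∧
      0 < ∫ p : ℝ × ℝ, (φ p * lap ψ p + ψ p * lap φ p) := by
  obtain ⟨f, h, hf, hh, f0, h0, cf, ch, hA, hB⟩ := exists_bump_one_dim
  refine ⟨fun q => f q.1 * f q.2, fun q => h q.1 * h q.2,
    (hf.comp contDiff_fst).mul (hf.comp contDiff_snd),
    (hh.comp contDiff_fst).mul (hh.comp contDiff_snd),
    fun q => mul_nonneg (f0 _) (f0 _), fun q => mul_nonneg (h0 _) (h0 _),
    hasCompactSupport_mul_prod cf, hasCompactSupport_mul_prod ch, ?_⟩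
  set a : ℝ → ℝ := fun x => f x * deriv (deriv h) x + h x * deriv (deriv f) x with ha
  set b : ℝ → ℝ := fun x => f x * h x with hb
  -- A non-integrable function has integral `0`, so positivity already yields integrability.
  have ia : Integrable a := not_imp_comm.1 integral_undef hA.ne'
  have ib : Integrable b := not_imp_comm.1 integral_undef hB.ne'
  have split : ∀ p : ℝ × ℝ, f p.1 * f p.2 * lap (fun q => h q.1 * h q.2) p +
      h p.1 * h p.2 * lap (fun q => f q.1 * f q.2) p = a p.1 * b p.2 + b p.1 * a p.2 := by
    intro p
    rw [lap_mul, lap_mul, ha, hb]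
    ring
  simp_rw [split]
  rw [Measure.volume_eq_prod, integral_add (ia.mul_prod ib) (ib.mul_prod ia),
    integral_prod_mul, integral_prod_mul]
  positivity
end

section
/- There exist smooth, strictly positive, 2π-periodic functions ξ, η : ℝ → ℝ such that ξ''(t) η(t) + η''(t) ξ(t) > 0 for all t ∈ ℝ (equivalently, ξ''(t)/ξ(t) + η''(t)/η(t) > 0 for all t). -/
/-!
Take `ξ = exp f` and `η = exp g`. Then `ξ'' η + η'' ξ = exp (f + g) (f'' + f' ^ 2 + g'' + g' ^ 2)`.
With `f = 2 cos t - cos (2t) / 2` and `g = -2 cos t - cos (2t) / 2`, the term `f'' + g'' = 4 cos (2t)`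
cancels the oscillating part of `8 sin t ^ 2 = 4 - 4 cos (2t)` in `f' ^ 2 + g' ^ 2`, so the second
factor equals `4 + 2 sin (2t) ^ 2 > 0`. The two functions are the cases `a = 2` and `a = -2` of
`exp (a cos t - cos (2t) / 2)`.
-/

open Real

theorem deriv_deriv_exp_trig (a t : ℝ) :
    deriv (deriv fun x : ℝ => exp (a * cos x - cos (2 * x) / 2)) t =
      exp (a * cos t - cos (2 * t) / 2) *
        ((-a * cos t + 2 * cos (2 * t)) + (-a * sin t + sin (2 * t)) ^ 2) := by
  have h2 (x : ℝ) : HasDerivAt (fun y : ℝ => 2 * y) 2 x := by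
    simpa using (hasDerivAt_id x).const_mul 2
  have h (x : ℝ) : HasDerivAt (fun x : ℝ => exp (a * cos x - cos (2 * x) / 2))
      (exp (a * cos x - cos (2 * x) / 2) * (-a * sin x + sin (2 * x))) x := by
    have hf : HasDerivAt (fun x : ℝ => a * cos x - cos (2 * x) / 2)
        (-a * sin x + sin (2 * x)) x :=
      (((hasDerivAt_cos x).const_mul a).sub ((h2 x).cos.div_const 2)).congr_deriv (by ring)
    exact hf.exp
  have h' : deriv (fun x : ℝ => exp (a * cos x - cos (2 * x) / 2)) =
      fun x => exp (a * cos x - cos (2 * x) / 2) * (-a * sin x + sin (2 * x)) :=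
    funext fun x => (h x).deriv
  rw [h']
  have hf' : HasDerivAt (fun x : ℝ => -a * sin x + sin (2 * x))
      (-a * cos t + 2 * cos (2 * t)) t :=
    (((hasDerivAt_sin t).const_mul (-a)).add (h2 t).sin).congr_deriv (by ring)
  exact (((h t).mul hf').congr_deriv (by ring)).deriv

theorem exp_trig_periodic (a t : ℝ) :
    exp (a * cos (t + 2 * π) - cos (2 * (t + 2 * π)) / 2) =
      exp (a * cos t - cos (2 * t) / 2) := by
  have : 2 * (t + 2 * π) = 2 * t + 2 * π + 2 * π := by ring
  rw [this, cos_add_two_pi, cos_add_two_pi, cos_add_two_pi]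

theorem exists_periodic_pos_pair :
    ∃ ξ η : ℝ → ℝ, ContDiff ℝ (⊤ : ℕ∞) ξ ∧ ContDiff ℝ (⊤ : ℕ∞) η ∧
      (∀ t : ℝ, 0 < ξ t) ∧ (∀ t : ℝ, 0 < η t) ∧
      (∀ t : ℝ, ξ (t + 2 * π) = ξ t) ∧ (∀ t : ℝ, η (t + 2 * π) = η t) ∧
      (∀ t : ℝ, 0 < deriv (deriv ξ) t * η t + deriv (deriv η) t * ξ t) := by
  refine ⟨fun x => exp (2 * cos x - cos (2 * x) / 2), fun x => exp (-2 * cos x - cos (2 * x) / 2),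
    by fun_prop, by fun_prop, fun t => exp_pos _, fun t => exp_pos _,
    exp_trig_periodic 2, exp_trig_periodic (-2), fun t => ?_⟩
  rw [deriv_deriv_exp_trig, deriv_deriv_exp_trig]
  have key : 0 < exp (2 * cos t - cos (2 * t) / 2) * exp (-2 * cos t - cos (2 * t) / 2) *
      (4 + 2 * sin (2 * t) ^ 2) := by positivity
  have hc : cos (2 * t) = 1 - 2 * sin t ^ 2 := by
    rw [cos_two_mul, cos_sq']
    ring
  convert key using 1
  beta_reduce
  -- The double-angle formula is applied only outside the exponentials.
  generalize exp (2 * cos t - cos (2 * t) / 2) = A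
  generalize exp (-2 * cos t - cos (2 * t) / 2) = B
  rw [hc]
  ring
end
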